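/- arXiv:2102.01019 — 6 statements merged into one kernel-verified Lean document; each statement's English description precedes it below -/
import Mathlib

section
/- Let ε = e^(2πi/5). For all complex numbers z and w, the forms f, H and T are invariant under the icosahedral substitutions (z,w) ↦ (ε^3·z, ε^2·w) and (z,w) ↦ (−w, z); that is, f(ε^3·z, ε^2·w) = f(z,w), H(ε^3·z, ε^2·w) = H(z,w), T(ε^3·z, ε^2·w) = T(z,w), f(−w,z) = f(z,w), H(−w,z) = H(z,w), and T(−w,z) = T(z,w). -/
open Complex

/-- Klein's icosahedral vertex form. -/
noncomputable def kleinF (z w : ℂ) : ℂ := z * w * (z ^ 10 + 11 * z ^ 5 * w ^ 5 - w ^ 10)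

/-- Klein's icosahedral face form. -/
noncomputable def kleinH (z w : ℂ) : ℂ :=
  -(z ^ 20 + w ^ 20) + 228 * (z ^ 15 * w ^ 5 - z ^ 5 * w ^ 15) - 494 * z ^ 10 * w ^ 10

/-- Klein's icosahedral edge form. -/
noncomputable def kleinT (z w : ℂ) : ℂ :=
  (z ^ 30 + w ^ 30) + 522 * (z ^ 25 * w ^ 5 - z ^ 5 * w ^ 25)
    - 10005 * (z ^ 20 * w ^ 10 + z ^ 10 * w ^ 20)

/-!
`H` and `T` are polynomials in `z ^ 5` and `w ^ 5`, and `f` is `z * w` times such a polynomial.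
The diagonal substitution fixes `z ^ 5` and `w ^ 5` because `ε ^ 5 = 1`, and it fixes `z * w`
because `ε ^ 3 * ε ^ 2 = 1`. The other substitution permutes the monomials up to sign, and
the coefficients have the matching symmetry.
-/

theorem pow_eq_pow_of_dvd {M : Type*} [Monoid M] {x y : M} {m n : ℕ} (h : x ^ m = y ^ m)
    (hmn : m ∣ n) : x ^ n = y ^ n := by
  obtain ⟨k, rfl⟩ := hmn
  rw [pow_mul, pow_mul, h]

theorem pow_mul_pow_eq_of_pow_eq_one {M : Type*} [CommMonoid M] {a : M} {m : ℕ} (ha : a ^ m = 1)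
    (k : ℕ) (x : M) : (a ^ k * x) ^ m = x ^ m := by
  rw [mul_pow, pow_right_comm, ha, one_pow, one_mul]

section FifthPowers

variable {z₁ w₁ z₂ w₂ : ℂ}

theorem kleinF_eq_of_pow_five_eq (hz : z₁ ^ 5 = z₂ ^ 5) (hw : w₁ ^ 5 = w₂ ^ 5)
    (hzw : z₁ * w₁ = z₂ * w₂) : kleinF z₁ w₁ = kleinF z₂ w₂ := by
  simp (disch := decide) only [kleinF, hzw, pow_eq_pow_of_dvd hz, pow_eq_pow_of_dvd hw]

theorem kleinH_eq_of_pow_five_eq (hz : z₁ ^ 5 = z₂ ^ 5) (hw : w₁ ^ 5 = w₂ ^ 5) :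
    kleinH z₁ w₁ = kleinH z₂ w₂ := by
  simp (disch := decide) only [kleinH, pow_eq_pow_of_dvd hz, pow_eq_pow_of_dvd hw]

theorem kleinT_eq_of_pow_five_eq (hz : z₁ ^ 5 = z₂ ^ 5) (hw : w₁ ^ 5 = w₂ ^ 5) :
    kleinT z₁ w₁ = kleinT z₂ w₂ := by
  simp (disch := decide) only [kleinT, pow_eq_pow_of_dvd hz, pow_eq_pow_of_dvd hw]

end FifthPowers

section QuarterTurn

variable (z w : ℂ)

theorem kleinF_neg_swap : kleinF (-w) z = kleinF z w := by
  unfold kleinF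
  ring

theorem kleinH_neg_swap : kleinH (-w) z = kleinH z w := by
  unfold kleinH
  ring

theorem kleinT_neg_swap : kleinT (-w) z = kleinT z w := by
  unfold kleinT
  ring

end QuarterTurn

/-- The forms f, H, T are invariant under the icosahedral substitutions
`(z,w) ↦ (ε³z, ε²w)` (with `ε = e^{2πi/5}`) and `(z,w) ↦ (−w, z)`. -/
theorem icosahedral_invariance (z w : ℂ) :
    letI ε : ℂ := Complex.exp (2 * Real.pi * Complex.I / 5)
    kleinF (ε ^ 3 * z) (ε ^ 2 * w) = kleinF z w ∧
    kleinH (ε ^ 3 * z) (ε ^ 2 * w) = kleinH z w ∧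
    kleinT (ε ^ 3 * z) (ε ^ 2 * w) = kleinT z w ∧
    kleinF (-w) z = kleinF z w ∧
    kleinH (-w) z = kleinH z w ∧
    kleinT (-w) z = kleinT z w := by
  have hε : exp (2 * Real.pi * I / 5) ^ 5 = 1 :=
    mod_cast (isPrimitiveRoot_exp 5 (by decide)).pow_eq_one
  generalize exp (2 * Real.pi * I / 5) = ε at hε ⊢
  have hz : (ε ^ 3 * z) ^ 5 = z ^ 5 := pow_mul_pow_eq_of_pow_eq_one hε 3 z
  have hw : (ε ^ 2 * w) ^ 5 = w ^ 5 := pow_mul_pow_eq_of_pow_eq_one hε 2 w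
  have hzw : ε ^ 3 * z * (ε ^ 2 * w) = z * w := by
    rw [mul_mul_mul_comm, ← pow_add, hε, one_mul]
  exact ⟨kleinF_eq_of_pow_five_eq hz hw hzw, kleinH_eq_of_pow_five_eq hz hw,
    kleinT_eq_of_pow_five_eq hz hw, kleinF_neg_swap z w, kleinH_neg_swap z w,
    kleinT_neg_swap z w⟩
end

section
/- For all complex numbers z and w, the product of the five octahedral forms equals the icosahedral edge form: ∏_{ν=0}^{4} t_ν(z,w) = T(z,w). -/
/-!
The substitution `z ↦ ε ^ ν * z` carries `t₀` to `t_ν` up to a power of `ε`, and `t₀` is a product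
of three quadratic forms, `z ^ 2 + w ^ 2` and `z ^ 2 + s * z * w - w ^ 2` for the two roots
`s = 1 ± √5` of `s ^ 2 = 2 * s + 4`. Splitting a quadratic form into linear factors and using
`∏ ν, (ε ^ ν * x + y) = x ^ 5 + y ^ 5`, its product over the five rotations becomes a quadratic form
in `z ^ 5` and `w ^ 5`. The edge form is the product of the three quadratic forms obtained this way.
-/

open Complex Finset

/-- The five octahedral forms `t_ν`, with `ε = e^{2πi/5}`. -/
noncomputable def octa (ν : ℕ) (z w : ℂ) : ℂ :=
  letI ε : ℂ := Complex.exp (2 * Real.pi * Complex.I / 5)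
  ε ^ (3 * ν) * z ^ 6 + 2 * ε ^ (2 * ν) * z ^ 5 * w - 5 * ε ^ ν * z ^ 4 * w ^ 2
    - 5 * ε ^ (4 * ν) * z ^ 2 * w ^ 4 - 2 * ε ^ (3 * ν) * z * w ^ 5 + ε ^ (2 * ν) * w ^ 6

section Forms

variable {R : Type*} [CommRing R]

/-- The icosahedral edge form over an arbitrary commutative ring; `kleinT` is the case `R = ℂ`. -/
def icosahedralEdgeForm (z w : R) : R :=
  (z ^ 30 + w ^ 30) + 522 * (z ^ 25 * w ^ 5 - z ^ 5 * w ^ 25)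
    - 10005 * (z ^ 20 * w ^ 10 + z ^ 10 * w ^ 20)

/-- The octahedral form `t_ν` over an arbitrary commutative ring, with `ε` in the role of
`e^{2πi/5}`; `octa` is the case `R = ℂ`. -/
def octahedralForm (ε : R) (ν : ℕ) (z w : R) : R :=
  ε ^ (3 * ν) * z ^ 6 + 2 * ε ^ (2 * ν) * z ^ 5 * w - 5 * ε ^ ν * z ^ 4 * w ^ 2
    - 5 * ε ^ (4 * ν) * z ^ 2 * w ^ 4 - 2 * ε ^ (3 * ν) * z * w ^ 5 + ε ^ (2 * ν) * w ^ 6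

theorem octahedralForm_eq_pow_mul_octahedralForm_zero {ε : R} (hε : ε ^ 5 = 1) (ν : ℕ) (z w : R) :
    octahedralForm ε ν z w = ε ^ (2 * ν) * octahedralForm ε 0 (ε ^ ν * z) w := by
  have hν : (ε ^ ν) ^ 5 = 1 := by rw [pow_right_comm, hε, one_pow]
  simp only [octahedralForm, mul_comm _ ν, pow_mul, pow_zero]
  generalize ε ^ ν = ζ at hν
  linear_combination
    (-ζ ^ 3 * z ^ 6 - 2 * ζ ^ 2 * z ^ 5 * w + 5 * ζ * z ^ 4 * w ^ 2) * hν

theorem octahedralForm_zero_eq_mul {s t : R} (hadd : s + t = 2) (hmul : s * t = -4) (ε z w : R) :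
    octahedralForm ε 0 z w =
      (z ^ 2 + w ^ 2) * ((z ^ 2 + s * z * w - w ^ 2) * (z ^ 2 + t * z * w - w ^ 2)) := by
  simp only [octahedralForm, mul_zero, pow_zero]
  linear_combination
    -(z ^ 2 + w ^ 2) * (z ^ 3 * w - z * w ^ 3) * hadd - (z ^ 2 + w ^ 2) * z ^ 2 * w ^ 2 * hmul

theorem icosahedralEdgeForm_eq_mul {s t : R} (hadd : s + t = 2) (hmul : s * t = -4) (z w : R) :
    icosahedralEdgeForm z w =
      (z ^ 10 + w ^ 10) *
        ((z ^ 10 + (s ^ 5 + 5 * s ^ 3 + 5 * s) * z ^ 5 * w ^ 5 - w ^ 10) *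
          (z ^ 10 + (t ^ 5 + 5 * t ^ 3 + 5 * t) * z ^ 5 * w ^ 5 - w ^ 10)) := by
  obtain rfl : t = 2 - s := by linear_combination hadd
  have hs : s ^ 2 = 2 * s + 4 := by linear_combination -hmul
  have quintic {r : R} (hr : r ^ 2 = 2 * r + 4) : r ^ 5 + 5 * r ^ 3 + 5 * r = 125 * r + 136 := by
    linear_combination (r ^ 3 + 2 * r ^ 2 + 13 * r + 34) * hr
  rw [quintic hs, quintic (by linear_combination hs), icosahedralEdgeForm]
  linear_combination (z ^ 10 + w ^ 10) * 125 ^ 2 * z ^ 10 * w ^ 10 * hs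

end Forms

theorem exists_add_eq_mul_eq {K : Type*} [Field K] [IsAlgClosed K] (s p : K) :
    ∃ a b : K, a + b = s ∧ a * b = p := by
  obtain ⟨a, ha⟩ := IsAlgClosed.exists_root
    (Polynomial.C 1 * Polynomial.X ^ 2 + Polynomial.C (-s) * Polynomial.X + Polynomial.C p)
    (by rw [Polynomial.degree_quadratic one_ne_zero]; decide)
  refine ⟨a, s - a, by ring, ?_⟩
  simp only [Polynomial.IsRoot.def, Polynomial.eval_add, Polynomial.eval_mul, Polynomial.eval_pow,
    Polynomial.eval_C, Polynomial.eval_X] at ha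
  linear_combination -ha

section RootsOfUnity

variable {R : Type*} [CommRing R] [IsDomain R] {ζ : R} {n : ℕ}

theorem prod_range_pow_mul_add (hζ : IsPrimitiveRoot ζ n) (hn : Odd n) (x y : R) :
    ∏ ν ∈ range n, (ζ ^ ν * x + y) = x ^ n + y ^ n := by
  simpa [Polynomial.eval_prod, hn.neg_pow, add_comm] using
    (congrArg (Polynomial.eval y) (X_pow_sub_C_eq_prod hζ hn.pos (α := -x) rfl)).symm

theorem prod_range_sq_add_add_mul (hζ : IsPrimitiveRoot ζ n) (hn : Odd n) (a b x y : R) :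
    ∏ ν ∈ range n, ((ζ ^ ν * x) ^ 2 + (a + b) * (ζ ^ ν * x) * y + a * b * y ^ 2) =
      (x ^ n) ^ 2 + (a ^ n + b ^ n) * x ^ n * y ^ n + a ^ n * b ^ n * (y ^ n) ^ 2 := by
  calc
    _ = ∏ ν ∈ range n, (ζ ^ ν * x + a * y) * (ζ ^ ν * x + b * y) :=
      prod_congr rfl fun ν _ ↦ by ring
    _ = (x ^ n + (a * y) ^ n) * (x ^ n + (b * y) ^ n) := by
      rw [prod_mul_distrib, prod_range_pow_mul_add hζ hn, prod_range_pow_mul_add hζ hn]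
    _ = _ := by ring

theorem prod_range_five_sq_add_mul_add (hζ : IsPrimitiveRoot ζ 5) (s p x y : R) :
    ∏ ν ∈ range 5, ((ζ ^ ν * x) ^ 2 + s * (ζ ^ ν * x) * y + p * y ^ 2) =
      x ^ 10 + (s ^ 5 - 5 * s ^ 3 * p + 5 * s * p ^ 2) * x ^ 5 * y ^ 5 + p ^ 5 * y ^ 10 := by
  let F := FractionRing R
  let f : R →+* AlgebraicClosure F := (algebraMap F _).comp (algebraMap R F)
  have hf : Function.Injective f := (algebraMap F _).injective.comp (IsFractionRing.injective R F)
  obtain ⟨a, b, hs, hp⟩ := exists_add_eq_mul_eq (f s) (f p)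
  apply hf
  simp only [map_prod, map_add, map_sub, map_mul, map_pow, map_ofNat, ← hs, ← hp]
  rw [prod_range_sq_add_add_mul (hζ.map_of_injective hf) (by decide)]
  ring

theorem gaussianPeriods_add (hζ : IsPrimitiveRoot ζ 5) : (ζ + ζ ^ 4) + (ζ ^ 2 + ζ ^ 3) = -1 := by
  have hsum := hζ.geom_sum_eq_zero (by decide)
  simp only [sum_range_succ, sum_range_zero] at hsum
  linear_combination hsum

theorem gaussianPeriods_mul (hζ : IsPrimitiveRoot ζ 5) : (ζ + ζ ^ 4) * (ζ ^ 2 + ζ ^ 3) = -1 := by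
  linear_combination gaussianPeriods_add hζ + (ζ + ζ ^ 2) * hζ.pow_eq_one

end RootsOfUnity

theorem prod_octa_eq_kleinT_general {R : Type*} [CommRing R] [IsDomain R] {ε : R}
    (hε : IsPrimitiveRoot ε 5) (z w : R) :
    ∏ ν ∈ range 5, octahedralForm ε ν z w = icosahedralEdgeForm z w := by
  -- The roots `1 ± √5` of `s ^ 2 = 2 * s + 4` are `-2` times the Gaussian periods.
  obtain ⟨s, t, hadd, hmul⟩ : ∃ s t : R, s + t = 2 ∧ s * t = -4 :=
    ⟨-2 * (ε + ε ^ 4), -2 * (ε ^ 2 + ε ^ 3), by linear_combination -2 * gaussianPeriods_add hε,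
      by linear_combination 4 * gaussianPeriods_mul hε⟩
  have hscalar : ∏ ν ∈ range 5, ε ^ (2 * ν) = 1 := by
    rw [prod_pow_eq_pow_sum, ← mul_sum]
    exact hε.pow_eq_one_iff_dvd _ |>.mpr (by decide)
  have hsum : ∏ ν ∈ range 5, ((ε ^ ν * z) ^ 2 + w ^ 2) = z ^ 10 + w ^ 10 := by
    simpa using prod_range_five_sq_add_mul_add hε 0 1 z w
  have hquad (r : R) : ∏ ν ∈ range 5, ((ε ^ ν * z) ^ 2 + r * (ε ^ ν * z) * w - w ^ 2) =
      z ^ 10 + (r ^ 5 + 5 * r ^ 3 + 5 * r) * z ^ 5 * w ^ 5 - w ^ 10 := by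
    convert prod_range_five_sq_add_mul_add hε r (-1) z w using 2 <;> ring
  simp only [octahedralForm_eq_pow_mul_octahedralForm_zero hε.pow_eq_one _ z w,
    octahedralForm_zero_eq_mul hadd hmul, prod_mul_distrib, hscalar, hsum, hquad, one_mul,
    icosahedralEdgeForm_eq_mul hadd hmul]

/-- The product of the five octahedral forms equals the icosahedral edge form. -/
theorem prod_octa_eq_kleinT (z w : ℂ) :
    ∏ ν ∈ Finset.range 5, octa ν z w = kleinT z w :=
  prod_octa_eq_kleinT_general (mod_cast Complex.isPrimitiveRoot_exp 5 (by decide)) z w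
end

section
/- Let h₁, h₂, η₁, η₂, p, q, α, β, γ be complex numbers with η₁ ≠ 0 and η₂ ≠ 0. Assume the Heymann resolvent equations h₁·η₁^5 − 10·η₁^2 + 15·η₁ − 6 = 0 and h₂·η₂^5 − 10·η₂^2 + 15·η₂ − 6 = 0, and the relation η₁·η₂ = η₁ + η₂. Then h₁·h₂·[ (p·η₁ + q·η₂)^5 + 5α·(p·η₁ + q·η₂)^2 + 5β·(p·η₁ + q·η₂) + γ ] = M·η₁^2 + N·η₂^2 + P·η₁ + Q·η₂ + R, where M = 5p^2·(2h₂p^3 + 2h₁q^3 + α·h₁h₂), N = 5q^2·(2h₁q^3 + 2h₂p^3 + α·h₁h₂), P = 5p·(−3h₂p^4 + 10h₂p^3q + 6h₁pq^3 + h₁q^4 + 2α·h₁h₂·q + β·h₁h₂), Q = 5q·(−3h₁q^4 + 10h₁q^3p + 6h₂qp^3 + h₂p^4 + 2α·h₁h₂·p + β·h₁h₂), and R = 6·(h₂p^5 − 5h₂p^4q + 10h₂q^2p^3 + 10h₁p^2q^3 − 5h₁pq^4 + h₁q^5) + γ·h₁h₂. -/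
/-!
The relation `η₁ * η₂ = η₁ + η₂` also reads `η₂ = η₁ * (η₂ - 1)`: a factor `η₂` may be traded for a
factor `η₁`. Hence each of `h₁ * η₁ ^ 4 * η₂` and `h₁ * η₁ ^ 3 * η₂ ^ 2` is a multiple of
`h₁ * η₁ ^ 5`, which the resolvent makes quadratic in `η₁`; the relation then eliminates the mixed
products. By symmetry, every monomial of `(p * η₁ + q * η₂) ^ 5` reduces to degree at most two once
it is multiplied by `h₁` (when `η₁` dominates) or `h₂` (when `η₂` does).
-/

/-- `η` is a root of Heymann's `η`-resolvent for the parameter `h`. The parameter may vanish, so the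
equation need not have degree five. -/
def IsHeymannRoot {A : Type*} [CommRing A] (h η : A) : Prop :=
  h * η ^ 5 - 10 * η ^ 2 + 15 * η - 6 = 0

section CommRing

variable {A : Type*} [CommRing A] {h h₁ h₂ η₁ η₂ : A}

theorem eq_mul_sub_one_of_mul_eq_add (hprod : η₁ * η₂ = η₁ + η₂) : η₂ = η₁ * (η₂ - 1) := by
  linear_combination -hprod

namespace IsHeymannRoot

theorem mul_pow_five (hη₁ : IsHeymannRoot h η₁) : h * η₁ ^ 5 = 10 * η₁ ^ 2 - 15 * η₁ + 6 := by
  unfold IsHeymannRoot at hη₁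
  linear_combination hη₁

theorem mul_pow_four_mul (hη₁ : IsHeymannRoot h η₁) (hprod : η₁ * η₂ = η₁ + η₂) :
    h * η₁ ^ 4 * η₂ = 10 * η₁ + η₂ - 6 :=
  calc
    h * η₁ ^ 4 * η₂ = h * η₁ ^ 5 * (η₂ - 1) := by
      linear_combination h * η₁ ^ 4 * eq_mul_sub_one_of_mul_eq_add hprod
    _ = (10 * η₁ ^ 2 - 15 * η₁ + 6) * (η₂ - 1) := by rw [hη₁.mul_pow_five]
    _ = 10 * η₁ + η₂ - 6 := by linear_combination (10 * η₁ - 5) * hprod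

theorem mul_pow_three_mul_sq (hη₁ : IsHeymannRoot h η₁) (hprod : η₁ * η₂ = η₁ + η₂) :
    h * η₁ ^ 3 * η₂ ^ 2 = η₂ ^ 2 + 3 * η₂ + 6 :=
  calc
    h * η₁ ^ 3 * η₂ ^ 2 = h * η₁ ^ 4 * η₂ * (η₂ - 1) := by
      linear_combination h * η₁ ^ 3 * η₂ * eq_mul_sub_one_of_mul_eq_add hprod
    _ = (10 * η₁ + η₂ - 6) * (η₂ - 1) := by rw [hη₁.mul_pow_four_mul hprod]
    _ = η₂ ^ 2 + 3 * η₂ + 6 := by linear_combination 10 * hprod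

theorem mul_mul_add_pow_five (hη₁ : IsHeymannRoot h₁ η₁) (hη₂ : IsHeymannRoot h₂ η₂)
    (hprod : η₁ * η₂ = η₁ + η₂) (p q : A) :
    h₁ * h₂ * (p * η₁ + q * η₂) ^ 5 =
      h₂ * (p ^ 5 * (10 * η₁ ^ 2 - 15 * η₁ + 6) + 5 * p ^ 4 * q * (10 * η₁ + η₂ - 6)
        + 10 * p ^ 3 * q ^ 2 * (η₂ ^ 2 + 3 * η₂ + 6))
      + h₁ * (q ^ 5 * (10 * η₂ ^ 2 - 15 * η₂ + 6) + 5 * q ^ 4 * p * (10 * η₂ + η₁ - 6)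
        + 10 * q ^ 3 * p ^ 2 * (η₁ ^ 2 + 3 * η₁ + 6)) := by
  have hprod' : η₂ * η₁ = η₂ + η₁ := by rw [mul_comm, hprod, add_comm]
  rw [← hη₁.mul_pow_five, ← hη₁.mul_pow_four_mul hprod, ← hη₁.mul_pow_three_mul_sq hprod,
    ← hη₂.mul_pow_five, ← hη₂.mul_pow_four_mul hprod', ← hη₂.mul_pow_three_mul_sq hprod']
  ring

end IsHeymannRoot

theorem heymann_substitution_general (hη₁ : IsHeymannRoot h₁ η₁) (hη₂ : IsHeymannRoot h₂ η₂)
    (hprod : η₁ * η₂ = η₁ + η₂) (p q α β γ : A) :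
    letI M : A := 5 * p ^ 2 * (2 * h₂ * p ^ 3 + 2 * h₁ * q ^ 3 + α * h₁ * h₂)
    letI N : A := 5 * q ^ 2 * (2 * h₁ * q ^ 3 + 2 * h₂ * p ^ 3 + α * h₁ * h₂)
    letI P : A := 5 * p * (-3 * h₂ * p ^ 4 + 10 * h₂ * p ^ 3 * q + 6 * h₁ * p * q ^ 3
      + h₁ * q ^ 4 + 2 * α * h₁ * h₂ * q + β * h₁ * h₂)
    letI Q : A := 5 * q * (-3 * h₁ * q ^ 4 + 10 * h₁ * q ^ 3 * p + 6 * h₂ * q * p ^ 3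
      + h₂ * p ^ 4 + 2 * α * h₁ * h₂ * p + β * h₁ * h₂)
    letI R : A := 6 * (h₂ * p ^ 5 - 5 * h₂ * p ^ 4 * q + 10 * h₂ * q ^ 2 * p ^ 3
      + 10 * h₁ * p ^ 2 * q ^ 3 - 5 * h₁ * p * q ^ 4 + h₁ * q ^ 5) + γ * h₁ * h₂
    h₁ * h₂ * ((p * η₁ + q * η₂) ^ 5 + 5 * α * (p * η₁ + q * η₂) ^ 2
      + 5 * β * (p * η₁ + q * η₂) + γ)
      = M * η₁ ^ 2 + N * η₂ ^ 2 + P * η₁ + Q * η₂ + R := by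
  have quintic_part := hη₁.mul_mul_add_pow_five hη₂ hprod p q
  have quadratic_part : (p * η₁ + q * η₂) ^ 2
      = p ^ 2 * η₁ ^ 2 + 2 * p * q * (η₁ + η₂) + q ^ 2 * η₂ ^ 2 := by
    rw [← hprod]
    ring
  linear_combination quintic_part + 5 * α * h₁ * h₂ * quadratic_part

end CommRing

/-- Substituting `y = p·η₁ + q·η₂` into the principal quintic yields the
simultaneous resolvent `M·η₁² + N·η₂² + P·η₁ + Q·η₂ + R`. -/
theorem heymann_substitution (h₁ h₂ η₁ η₂ p q α β γ : ℂ)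
    (hη₁ : η₁ ≠ 0) (hη₂ : η₂ ≠ 0)
    (hres₁ : h₁ * η₁ ^ 5 - 10 * η₁ ^ 2 + 15 * η₁ - 6 = 0)
    (hres₂ : h₂ * η₂ ^ 5 - 10 * η₂ ^ 2 + 15 * η₂ - 6 = 0)
    (hprod : η₁ * η₂ = η₁ + η₂) :
    letI M : ℂ := 5 * p ^ 2 * (2 * h₂ * p ^ 3 + 2 * h₁ * q ^ 3 + α * h₁ * h₂)
    letI N : ℂ := 5 * q ^ 2 * (2 * h₁ * q ^ 3 + 2 * h₂ * p ^ 3 + α * h₁ * h₂)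
    letI P : ℂ := 5 * p * (-3 * h₂ * p ^ 4 + 10 * h₂ * p ^ 3 * q + 6 * h₁ * p * q ^ 3
      + h₁ * q ^ 4 + 2 * α * h₁ * h₂ * q + β * h₁ * h₂)
    letI Q : ℂ := 5 * q * (-3 * h₁ * q ^ 4 + 10 * h₁ * q ^ 3 * p + 6 * h₂ * q * p ^ 3
      + h₂ * p ^ 4 + 2 * α * h₁ * h₂ * p + β * h₁ * h₂)
    letI R : ℂ := 6 * (h₂ * p ^ 5 - 5 * h₂ * p ^ 4 * q + 10 * h₂ * q ^ 2 * p ^ 3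
      + 10 * h₁ * p ^ 2 * q ^ 3 - 5 * h₁ * p * q ^ 4 + h₁ * q ^ 5) + γ * h₁ * h₂
    h₁ * h₂ * ((p * η₁ + q * η₂) ^ 5 + 5 * α * (p * η₁ + q * η₂) ^ 2
      + 5 * β * (p * η₁ + q * η₂) + γ)
      = M * η₁ ^ 2 + N * η₂ ^ 2 + P * η₁ + Q * η₂ + R :=
  heymann_substitution_general hres₁ hres₂ hprod p q α β γ
end

section
/- Let h₁, h₂, η₁, η₂, p, q be complex numbers with h₁ ≠ 0, h₂ ≠ 0, η₁ ≠ 0, η₂ ≠ 0. Assume the Heymann resolvent equations h₁·η₁^5 − 10·η₁^2 + 15·η₁ − 6 = 0 and h₂·η₂^5 − 10·η₂^2 + 15·η₂ − 6 = 0, and the relation η₁·η₂ = η₁ + η₂. Define α = −2·(p^3/h₁ + q^3/h₂), β = 3·(p^3·(p−2q)/h₁ − q^3·(2p−q)/h₂), and γ = −6·(p^3·(p^2−5pq+10q^2)/h₁ + q^3·(10p^2−5pq+q^2)/h₂). Then y = p·η₁ + q·η₂ is a root of the principal quintic: y^5 + 5α·y^2 + 5β·y + γ = 0. -/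
/-!
From `η₁ * η₂ = η₁ + η₂` we get `η₂ = η₁ * (η₂ - 1)`, so the three terms of the binomial expansion
of `(p * η₁ + q * η₂) ^ 5` that contain `η₁ ^ 3` are multiples of `η₁ ^ 5`. The resolvent equation
lowers their degree, and their sum becomes a quadratic polynomial in `p * η₁ + q * η₂` itself. The
other three terms are treated in the same way with the two indices exchanged.
-/

/-- `η` is a root of Heymann's `η`-resolvent for the parameter `h`; the equation reduces `h * η ^ 5`
to a quadratic polynomial in `η`. It makes sense in any commutative ring, and `h` may be `0`. -/
def IsHeymannResolventRoot {R : Type*} [CommRing R] (h η : R) : Prop :=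
  h * η ^ 5 - 10 * η ^ 2 + 15 * η - 6 = 0

namespace IsHeymannResolventRoot

variable {R : Type*} [CommRing R] {h η₁ η₂ : R}

lemma mul_pow_five (hη : IsHeymannResolventRoot h η₁) :
    h * η₁ ^ 5 = 10 * η₁ ^ 2 - 15 * η₁ + 6 := by
  unfold IsHeymannResolventRoot at hη
  linear_combination hη

lemma mul_pow_four_mul (hη : IsHeymannResolventRoot h η₁) (hprod : η₁ * η₂ = η₁ + η₂) :
    h * (η₁ ^ 4 * η₂) = 4 * (η₁ * η₂) + 6 * η₁ - 3 * η₂ - 6 := by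
  have hη₂ : η₂ = η₁ * (η₂ - 1) := by linear_combination -hprod
  calc
    h * (η₁ ^ 4 * η₂) = h * η₁ ^ 5 * (η₂ - 1) := by linear_combination h * η₁ ^ 4 * hη₂
    _ = (10 * η₁ ^ 2 - 15 * η₁ + 6) * (η₂ - 1) := by rw [hη.mul_pow_five]
    _ = 4 * (η₁ * η₂) + 6 * η₁ - 3 * η₂ - 6 := by linear_combination (10 * η₁ - 9) * hprod

lemma mul_pow_three_mul_sq (hη : IsHeymannResolventRoot h η₁) (hprod : η₁ * η₂ = η₁ + η₂) :
    h * (η₁ ^ 3 * η₂ ^ 2) = η₂ ^ 2 + 3 * η₂ + 6 := by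
  have hη₂ : η₂ = η₁ * (η₂ - 1) := by linear_combination -hprod
  calc
    h * (η₁ ^ 3 * η₂ ^ 2) = h * (η₁ ^ 4 * η₂) * (η₂ - 1) := by
      linear_combination h * η₁ ^ 3 * η₂ * hη₂
    _ = (4 * (η₁ * η₂) + 6 * η₁ - 3 * η₂ - 6) * (η₂ - 1) := by rw [hη.mul_pow_four_mul hprod]
    _ = η₂ ^ 2 + 3 * η₂ + 6 := by linear_combination (4 * η₂ + 6) * hprod

lemma mul_half_binomial_eq (hη : IsHeymannResolventRoot h η₁) (hprod : η₁ * η₂ = η₁ + η₂)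
    (p q : R) :
    h * ((p * η₁) ^ 5 + 5 * (p * η₁) ^ 4 * (q * η₂) + 10 * (p * η₁) ^ 3 * (q * η₂) ^ 2) =
      p ^ 3 * (10 * (p * η₁ + q * η₂) ^ 2 - 15 * (p - 2 * q) * (p * η₁ + q * η₂)
        + 6 * (p ^ 2 - 5 * p * q + 10 * q ^ 2)) := by
  linear_combination p ^ 5 * hη.mul_pow_five + 5 * p ^ 4 * q * hη.mul_pow_four_mul hprod
    + 10 * p ^ 3 * q ^ 2 * hη.mul_pow_three_mul_sq hprod

lemma half_binomial_eq {u : Rˣ} (hη : IsHeymannResolventRoot (u : R) η₁)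
    (hprod : η₁ * η₂ = η₁ + η₂) (p q : R) :
    (p * η₁) ^ 5 + 5 * (p * η₁) ^ 4 * (q * η₂) + 10 * (p * η₁) ^ 3 * (q * η₂) ^ 2 =
      ↑u⁻¹ * (p ^ 3 * (10 * (p * η₁ + q * η₂) ^ 2 - 15 * (p - 2 * q) * (p * η₁ + q * η₂)
        + 6 * (p ^ 2 - 5 * p * q + 10 * q ^ 2))) :=
  u.eq_inv_mul_iff_mul_eq.mpr (hη.mul_half_binomial_eq hprod p q)

end IsHeymannResolventRoot

theorem heymann_root_general {R : Type*} [CommRing R] (h₁ h₂ : Rˣ) {η₁ η₂ : R} (p q : R)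
    (hη₁ : IsHeymannResolventRoot (h₁ : R) η₁) (hη₂ : IsHeymannResolventRoot (h₂ : R) η₂)
    (hprod : η₁ * η₂ = η₁ + η₂) :
    letI α : R := -2 * (p ^ 3 * ↑h₁⁻¹ + q ^ 3 * ↑h₂⁻¹)
    letI β : R := 3 * (p ^ 3 * (p - 2 * q) * ↑h₁⁻¹ - q ^ 3 * (2 * p - q) * ↑h₂⁻¹)
    letI γ : R := -6 * (p ^ 3 * (p ^ 2 - 5 * p * q + 10 * q ^ 2) * ↑h₁⁻¹
      + q ^ 3 * (10 * p ^ 2 - 5 * p * q + q ^ 2) * ↑h₂⁻¹)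
    letI y : R := p * η₁ + q * η₂
    y ^ 5 + 5 * α * y ^ 2 + 5 * β * y + γ = 0 := by
  have hprod' : η₂ * η₁ = η₂ + η₁ := by rw [mul_comm, hprod, add_comm]
  linear_combination hη₁.half_binomial_eq hprod p q + hη₂.half_binomial_eq hprod' q p

/-- With Heymann's parametrization of the coefficients, `y = p·η₁ + q·η₂` is a root
of the principal quintic. -/
theorem heymann_root (h₁ h₂ η₁ η₂ p q : ℂ)
    (hh₁ : h₁ ≠ 0) (hh₂ : h₂ ≠ 0) (hη₁ : η₁ ≠ 0) (hη₂ : η₂ ≠ 0)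
    (hres₁ : h₁ * η₁ ^ 5 - 10 * η₁ ^ 2 + 15 * η₁ - 6 = 0)
    (hres₂ : h₂ * η₂ ^ 5 - 10 * η₂ ^ 2 + 15 * η₂ - 6 = 0)
    (hprod : η₁ * η₂ = η₁ + η₂) :
    letI α : ℂ := -2 * (p ^ 3 / h₁ + q ^ 3 / h₂)
    letI β : ℂ := 3 * (p ^ 3 * (p - 2 * q) / h₁ - q ^ 3 * (2 * p - q) / h₂)
    letI γ : ℂ := -6 * (p ^ 3 * (p ^ 2 - 5 * p * q + 10 * q ^ 2) / h₁
      + q ^ 3 * (10 * p ^ 2 - 5 * p * q + q ^ 2) / h₂)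
    letI y : ℂ := p * η₁ + q * η₂
    y ^ 5 + 5 * α * y ^ 2 + 5 * β * y + γ = 0 := by
  simpa only [div_eq_mul_inv, Units.val_inv_eq_inv_val, Units.val_mk0] using
    heymann_root_general (Units.mk0 h₁ hh₁) (Units.mk0 h₂ hh₂) p q hres₁ hres₂ hprod
end

section
/- Let h₁, h₂, p, q be complex numbers with h₁ ≠ 0, h₂ ≠ 0 and h₁ + h₂ = 1, and define α = −2·(p^3/h₁ + q^3/h₂), β = 3·(p^3·(p−2q)/h₁ − q^3·(2p−q)/h₂), γ = −6·(p^3·(p^2−5pq+10q^2)/h₁ + q^3·(10p^2−5pq+q^2)/h₂). Then r = (p−q)^2 satisfies the central quadratic relation (α^4 + α·β·γ − β^3)·(12r)^2 − (2·α^3·γ + 11·α^2·β^2 + β·γ^2)·(12r) + (α·γ − 8·β^2)^2 = 0. -/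
/-!
Put `a = p³/h₁` and `b = q³/h₂`. The coefficients `α`, `β`, `γ` are linear forms in `a` and `b`, so
there is a linear relation between them: `γ = 12(p-q)²α + 6(p+q)β`. Eliminating `γ`, the terms of
degree four in `(α, β, γ)` become a difference of two squares, because `27 · 12(p-q)²` is the square
of `18(p-q)`; it is `β²` times a multiple of `ab`, and the terms of degree three are `β²` times a
multiple of `q³a + p³b`. Altogether the central quadratic at `r = (p-q)²` equals
`5184 (p-q)² β² (q³a + p³b - ab)`, and the last factor vanishes because `h₁ + h₂ = 1`.
-/

section CommRing

variable {R : Type*} [CommRing R]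

/-- The central quadratic form of a principal quintic with coefficients `α`, `β`, `γ`, as a function
of `s = 12r`. -/
def centralQuadratic (α β γ s : R) : R :=
  (α ^ 4 + α * β * γ - β ^ 3) * s ^ 2
    - (2 * α ^ 3 * γ + 11 * α ^ 2 * β ^ 2 + β * γ ^ 2) * s
    + (α * γ - 8 * β ^ 2) ^ 2

/-- Heymann's coefficient `α`. The parameters `h₁`, `h₂` enter only through the weights
`a = p³/h₁` and `b = q³/h₂`, which keeps the definition free of division. -/
def heymannAlpha (a b : R) : R :=
  -2 * (a + b)

/-- Heymann's coefficient `β`, with weights `a = p³/h₁` and `b = q³/h₂`. -/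
def heymannBeta (p q a b : R) : R :=
  3 * (a * (p - 2 * q) - b * (2 * p - q))

/-- Heymann's coefficient `γ`, with weights `a = p³/h₁` and `b = q³/h₂`. -/
def heymannGamma (p q a b : R) : R :=
  -6 * (a * (p ^ 2 - 5 * p * q + 10 * q ^ 2) + b * (10 * p ^ 2 - 5 * p * q + q ^ 2))

theorem heymannGamma_eq_add (p q a b : R) :
    heymannGamma p q a b =
      12 * (p - q) ^ 2 * heymannAlpha a b + 6 * (p + q) * heymannBeta p q a b := by
  unfold heymannGamma heymannAlpha heymannBeta
  ring

theorem two_mul_heymannBeta_sub (p q a b : R) :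
    2 * heymannBeta p q a b - 3 * (2 * p - q) * heymannAlpha a b = 18 * (p - q) * a := by
  unfold heymannBeta heymannAlpha
  ring

theorem two_mul_heymannBeta_add (p q a b : R) :
    2 * heymannBeta p q a b + 3 * (p - 2 * q) * heymannAlpha a b = -18 * (p - q) * b := by
  unfold heymannBeta heymannAlpha
  ring

theorem add_mul_heymannGamma_add (p q a b : R) :
    (p + q) * heymannGamma p q a b + 2 * (p - q) ^ 2 * heymannBeta p q a b =
      -72 * (q ^ 3 * a + p ^ 3 * b) := by
  unfold heymannGamma heymannBeta
  ring

theorem centralQuadratic_eq_sq_mul {p q α β γ : R}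
    (hγ : γ = 12 * (p - q) ^ 2 * α + 6 * (p + q) * β) :
    centralQuadratic α β γ (12 * (p - q) ^ 2) =
      β ^ 2 * (16 * ((2 * β - 3 * (2 * p - q) * α) * (2 * β + 3 * (p - 2 * q) * α))
        - 72 * (p - q) ^ 2 * ((p + q) * γ + 2 * (p - q) ^ 2 * β)) := by
  subst hγ
  unfold centralQuadratic
  ring

theorem centralQuadratic_heymann (p q a b : R) :
    centralQuadratic (heymannAlpha a b) (heymannBeta p q a b) (heymannGamma p q a b)
        (12 * (p - q) ^ 2) =
      5184 * (p - q) ^ 2 * heymannBeta p q a b ^ 2 * (q ^ 3 * a + p ^ 3 * b - a * b) := by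
  rw [centralQuadratic_eq_sq_mul (heymannGamma_eq_add p q a b), two_mul_heymannBeta_sub,
    two_mul_heymannBeta_add, add_mul_heymannGamma_add]
  ring

end CommRing

section Field

variable {K : Type*} [Field K]

theorem mul_div_add_mul_div_of_add_eq_one {h₁ h₂ : K} (hh₁ : h₁ ≠ 0) (hh₂ : h₂ ≠ 0)
    (hsum : h₁ + h₂ = 1) (x y : K) :
    y * (x / h₁) + x * (y / h₂) = x / h₁ * (y / h₂) := by
  field_simp
  linear_combination x * y * hsum

theorem heymann_central_quadratic_general (h₁ h₂ p q : K) (hh₁ : h₁ ≠ 0) (hh₂ : h₂ ≠ 0)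
    (hsum : h₁ + h₂ = 1) :
    letI α : K := -2 * (p ^ 3 / h₁ + q ^ 3 / h₂)
    letI β : K := 3 * (p ^ 3 * (p - 2 * q) / h₁ - q ^ 3 * (2 * p - q) / h₂)
    letI γ : K := -6 * (p ^ 3 * (p ^ 2 - 5 * p * q + 10 * q ^ 2) / h₁
      + q ^ 3 * (10 * p ^ 2 - 5 * p * q + q ^ 2) / h₂)
    letI r : K := (p - q) ^ 2
    (α ^ 4 + α * β * γ - β ^ 3) * (12 * r) ^ 2
      - (2 * α ^ 3 * γ + 11 * α ^ 2 * β ^ 2 + β * γ ^ 2) * (12 * r)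
      + (α * γ - 8 * β ^ 2) ^ 2 = 0 := by
  simp only [mul_div_right_comm]
  set a := p ^ 3 / h₁
  set b := q ^ 3 / h₂
  have hab : q ^ 3 * a + p ^ 3 * b = a * b :=
    mul_div_add_mul_div_of_add_eq_one hh₁ hh₂ hsum (p ^ 3) (q ^ 3)
  calc
    centralQuadratic (heymannAlpha a b) (heymannBeta p q a b) (heymannGamma p q a b)
        (12 * (p - q) ^ 2)
      = 5184 * (p - q) ^ 2 * heymannBeta p q a b ^ 2 * (q ^ 3 * a + p ^ 3 * b - a * b) :=
        centralQuadratic_heymann p q a b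
    _ = 0 := by rw [hab, sub_self, mul_zero]

end Field

/-- The central quadratic relation satisfied by `r = (p−q)²`. -/
theorem heymann_central_quadratic (h₁ h₂ p q : ℂ) (hh₁ : h₁ ≠ 0) (hh₂ : h₂ ≠ 0)
    (hsum : h₁ + h₂ = 1) :
    letI α : ℂ := -2 * (p ^ 3 / h₁ + q ^ 3 / h₂)
    letI β : ℂ := 3 * (p ^ 3 * (p - 2 * q) / h₁ - q ^ 3 * (2 * p - q) / h₂)
    letI γ : ℂ := -6 * (p ^ 3 * (p ^ 2 - 5 * p * q + 10 * q ^ 2) / h₁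
      + q ^ 3 * (10 * p ^ 2 - 5 * p * q + q ^ 2) / h₂)
    letI r : ℂ := (p - q) ^ 2
    (α ^ 4 + α * β * γ - β ^ 3) * (12 * r) ^ 2
      - (2 * α ^ 3 * γ + 11 * α ^ 2 * β ^ 2 + β * γ ^ 2) * (12 * r)
      + (α * γ - 8 * β ^ 2) ^ 2 = 0 :=
  heymann_central_quadratic_general h₁ h₂ p q hh₁ hh₂ hsum
end

section
/- Let z, w be complex numbers with f(z,w) ≠ 0, set α = −z·w^2, β = z^3·w, γ = −(z^5 − w^5) (Euler's parametrization), r = w^4·(7·z^5 + w^5)^2/(12·f(z,w)) and s = z^3·(−z^10 + 39·z^5·w^5 + 26·w^10)/(6·f(z,w)). Then 1728·27·β·(s^2 − r)^3·f(z,w)^5 = H(z,w)^3·(12·(α·γ − β^2)·r − γ^2). In particular, if 12·(α·γ − β^2)·r − γ^2 ≠ 0, then the icosahedral parameter satisfies 4·(432·β·((s^2 − r)/4)^3/(12·(α·γ − β^2)·r − γ^2)) = H(z,w)^3/(1728·f(z,w)^5). -/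
/-!
Write `K = z * (z ^ 5 + 3 * w ^ 5)`. Cleared of denominators, both quantities entering the Heymann
product are divisible by powers of `K`: `36 * f ^ 2 * (s ^ 2 - r) = -(H * K)` and
`f * (12 * (α * γ - β ^ 2) * r - γ ^ 2) = -(β * K ^ 3)`. Cubing the first relation, the factor
`β * K ^ 3` cancels against the second and only `H ^ 3 / f ^ 5` survives.
-/

section Forms

variable {R : Type*} [CommRing R]

/-- Klein's icosahedral vertex form `f` over a commutative ring. -/
def icosahedralVertexForm (z w : R) : R := z * w * (z ^ 10 + 11 * z ^ 5 * w ^ 5 - w ^ 10)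

/-- Klein's icosahedral face form `H` over a commutative ring. -/
def icosahedralFaceForm (z w : R) : R :=
  -(z ^ 20 + w ^ 20) + 228 * (z ^ 15 * w ^ 5 - z ^ 5 * w ^ 15) - 494 * z ^ 10 * w ^ 10

/-- The coefficient `α` of the principal quintic in Euler's parametrization. -/
def eulerAlpha (z w : R) : R := -(z * w ^ 2)

/-- The coefficient `β` of the principal quintic in Euler's parametrization. -/
def eulerBeta (z w : R) : R := z ^ 3 * w

/-- The coefficient `γ` of the principal quintic in Euler's parametrization. -/
def eulerGamma (z w : R) : R := -(z ^ 5 - w ^ 5)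

/-- The form `K` which, up to powers of `f`, divides `s ^ 2 - r` once and the denominator of the
Heymann product three times. -/
def eulerCofactor (z w : R) : R := z * (z ^ 5 + 3 * w ^ 5)

theorem eulerAlpha_mul_eulerGamma_sub_eulerBeta_sq (z w : R) :
    eulerAlpha z w * eulerGamma z w - eulerBeta z w ^ 2 = -(z * w ^ 7) := by
  unfold eulerAlpha eulerBeta eulerGamma
  ring

theorem eulerBeta_mul_eulerCofactor_pow_three (z w : R) :
    eulerBeta z w * eulerCofactor z w ^ 3 =
      z * w ^ 7 * (w ^ 4 * (7 * z ^ 5 + w ^ 5) ^ 2) +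
        icosahedralVertexForm z w * eulerGamma z w ^ 2 := by
  unfold eulerBeta eulerCofactor icosahedralVertexForm eulerGamma
  ring

theorem icosahedralFaceForm_mul_eulerCofactor (z w : R) :
    icosahedralFaceForm z w * eulerCofactor z w =
      3 * icosahedralVertexForm z w * (w ^ 4 * (7 * z ^ 5 + w ^ 5) ^ 2) -
        (z ^ 3 * (-z ^ 10 + 39 * z ^ 5 * w ^ 5 + 26 * w ^ 10)) ^ 2 := by
  unfold icosahedralFaceForm eulerCofactor icosahedralVertexForm
  ring

end Forms

section HeymannProduct

variable {F : Type*} [Field F] {z w : F}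

/-- The quantity `r = (p - q) ^ 2` at Euler's parametrization, where `p` and `q` are the two numbers
whose product enters the Heymann product. -/
def heymannDiffSq (z w : F) : F :=
  w ^ 4 * (7 * z ^ 5 + w ^ 5) ^ 2 / (12 * icosahedralVertexForm z w)

/-- The quantity `s = p + q` at Euler's parametrization, with `p` and `q` as in `heymannDiffSq`. -/
def heymannSum (z w : F) : F :=
  z ^ 3 * (-z ^ 10 + 39 * z ^ 5 * w ^ 5 + 26 * w ^ 10) / (6 * icosahedralVertexForm z w)

/-- The denominator `12 * (α * γ - β ^ 2) * r - γ ^ 2` of the Heymann product `h₁ * h₂`. -/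
def heymannDenom (z w : F) : F :=
  12 * (eulerAlpha z w * eulerGamma z w - eulerBeta z w ^ 2) * heymannDiffSq z w -
    eulerGamma z w ^ 2

/-- The Heymann product `h₁ * h₂ = 432 * β * (p * q) ^ 3 / heymannDenom`, where `p * q` is written
as `(s ^ 2 - r) / 4` so that no square root of `r` has to be chosen. -/
def heymannProduct (z w : F) : F :=
  432 * eulerBeta z w * ((heymannSum z w ^ 2 - heymannDiffSq z w) / 4) ^ 3 / heymannDenom z w

theorem twelve_mul_icosahedralVertexForm_mul_heymannDiffSq (h6 : (6 : F) ≠ 0)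
    (hf : icosahedralVertexForm z w ≠ 0) :
    12 * icosahedralVertexForm z w * heymannDiffSq z w = w ^ 4 * (7 * z ^ 5 + w ^ 5) ^ 2 := by
  have h12 : (12 : F) ≠ 0 := fun h ↦ mul_ne_zero h6 h6 (by linear_combination 3 * h)
  exact mul_div_cancel₀ _ (mul_ne_zero h12 hf)

theorem six_mul_icosahedralVertexForm_mul_heymannSum (h6 : (6 : F) ≠ 0)
    (hf : icosahedralVertexForm z w ≠ 0) :
    6 * icosahedralVertexForm z w * heymannSum z w =
      z ^ 3 * (-z ^ 10 + 39 * z ^ 5 * w ^ 5 + 26 * w ^ 10) :=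
  mul_div_cancel₀ _ (mul_ne_zero h6 hf)

theorem icosahedralVertexForm_sq_mul_heymannSum_sq_sub_heymannDiffSq (h6 : (6 : F) ≠ 0)
    (hf : icosahedralVertexForm z w ≠ 0) :
    36 * icosahedralVertexForm z w ^ 2 * (heymannSum z w ^ 2 - heymannDiffSq z w) =
      -(icosahedralFaceForm z w * eulerCofactor z w) := by
  rw [icosahedralFaceForm_mul_eulerCofactor,
    ← twelve_mul_icosahedralVertexForm_mul_heymannDiffSq h6 hf,
    ← six_mul_icosahedralVertexForm_mul_heymannSum h6 hf]
  ring

theorem icosahedralVertexForm_mul_heymannDenom (h6 : (6 : F) ≠ 0)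
    (hf : icosahedralVertexForm z w ≠ 0) :
    icosahedralVertexForm z w * heymannDenom z w = -(eulerBeta z w * eulerCofactor z w ^ 3) := by
  rw [heymannDenom, eulerAlpha_mul_eulerGamma_sub_eulerBeta_sq,
    eulerBeta_mul_eulerCofactor_pow_three,
    ← twelve_mul_icosahedralVertexForm_mul_heymannDiffSq h6 hf]
  ring

theorem icosahedralFaceForm_pow_three_mul_heymannDenom (h6 : (6 : F) ≠ 0)
    (hf : icosahedralVertexForm z w ≠ 0) :
    icosahedralFaceForm z w ^ 3 * heymannDenom z w =
      1728 * 27 * eulerBeta z w * (heymannSum z w ^ 2 - heymannDiffSq z w) ^ 3 *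
        icosahedralVertexForm z w ^ 5 := by
  apply mul_left_cancel₀ hf
  calc
    icosahedralVertexForm z w * (icosahedralFaceForm z w ^ 3 * heymannDenom z w)
      = icosahedralFaceForm z w ^ 3 * (icosahedralVertexForm z w * heymannDenom z w) := by ring
    _ = eulerBeta z w * (-(icosahedralFaceForm z w * eulerCofactor z w)) ^ 3 := by
      rw [icosahedralVertexForm_mul_heymannDenom h6 hf]
      ring
    _ = eulerBeta z w * (36 * icosahedralVertexForm z w ^ 2 *
          (heymannSum z w ^ 2 - heymannDiffSq z w)) ^ 3 := by
      rw [icosahedralVertexForm_sq_mul_heymannSum_sq_sub_heymannDiffSq h6 hf]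
    _ = icosahedralVertexForm z w * (1728 * 27 * eulerBeta z w *
          (heymannSum z w ^ 2 - heymannDiffSq z w) ^ 3 * icosahedralVertexForm z w ^ 5) := by ring

theorem four_mul_heymannProduct (h6 : (6 : F) ≠ 0) (hf : icosahedralVertexForm z w ≠ 0)
    (hD : heymannDenom z w ≠ 0) :
    4 * heymannProduct z w =
      icosahedralFaceForm z w ^ 3 / (1728 * icosahedralVertexForm z w ^ 5) := by
  have h4 : (4 : F) ≠ 0 := fun h ↦ mul_ne_zero h6 h6 (by linear_combination 9 * h)
  have h1728 : (1728 : F) ≠ 0 := fun h ↦ pow_ne_zero 6 h6 (by linear_combination 27 * h)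
  have product_eq : 4 * heymannProduct z w =
      27 * eulerBeta z w * (heymannSum z w ^ 2 - heymannDiffSq z w) ^ 3 / heymannDenom z w := by
    rw [heymannProduct]
    field_simp
    ring
  rw [product_eq, div_eq_div_iff hD (mul_ne_zero h1728 (pow_ne_zero 5 hf)),
    icosahedralFaceForm_pow_three_mul_heymannDenom h6 hf]
  ring

theorem euler_icosahedral_parameter_general (h6 : (6 : F) ≠ 0)
    (hf : icosahedralVertexForm z w ≠ 0) :
    1728 * 27 * eulerBeta z w * (heymannSum z w ^ 2 - heymannDiffSq z w) ^ 3 *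
          icosahedralVertexForm z w ^ 5 =
        icosahedralFaceForm z w ^ 3 * heymannDenom z w ∧
      (heymannDenom z w ≠ 0 →
        4 * heymannProduct z w =
          icosahedralFaceForm z w ^ 3 / (1728 * icosahedralVertexForm z w ^ 5)) :=
  ⟨(icosahedralFaceForm_pow_three_mul_heymannDenom h6 hf).symm, four_mul_heymannProduct h6 hf⟩

end HeymannProduct

/-- Under Euler's parametrization, `4·h₁·h₂` is the icosahedral parameter
`J = H³/(1728·f⁵)`. -/
theorem euler_icosahedral_parameter (z w : ℂ) (hf : kleinF z w ≠ 0) :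
    letI α : ℂ := -(z * w ^ 2)
    letI β : ℂ := z ^ 3 * w
    letI γ : ℂ := -(z ^ 5 - w ^ 5)
    letI r : ℂ := w ^ 4 * (7 * z ^ 5 + w ^ 5) ^ 2 / (12 * kleinF z w)
    letI s : ℂ := z ^ 3 * (-z ^ 10 + 39 * z ^ 5 * w ^ 5 + 26 * w ^ 10) / (6 * kleinF z w)
    (1728 * 27 * β * (s ^ 2 - r) ^ 3 * kleinF z w ^ 5
      = kleinH z w ^ 3 * (12 * (α * γ - β ^ 2) * r - γ ^ 2)) ∧
    (12 * (α * γ - β ^ 2) * r - γ ^ 2 ≠ 0 →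
      4 * (432 * β * ((s ^ 2 - r) / 4) ^ 3 / (12 * (α * γ - β ^ 2) * r - γ ^ 2))
        = kleinH z w ^ 3 / (1728 * kleinF z w ^ 5)) :=
  euler_icosahedral_parameter_general (by norm_num) hf
end
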